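/- Let Γ be the group with underlying set ℤ⁴ and multiplication (k₁,k₂,k₃,k₄)(l₁,l₂,l₃,l₄) = (k₁+l₁, k₂+l₂+k₄l₃, k₃+l₃, k₄+l₄), and for real α, β > 0 let σ_{α,β}(k,l) = exp(2πi(−αβk₁l₃ + β³k₄l₂ + β³k₄²l₃/2)). Suppose that β³ is irrational, that αβ is rational, and that a is the minimal positive integer with aαβ ∈ ℤ. Then the twisted center Z(Γ,σ_{α,β}) is exactly the subgroup {(ak,0,0,0) : k ∈ ℤ} = aℤ × {0} × {0} × {0}. -/

import Mathlib

/-- The group `Γ = ℤ × H₃(ℤ)` (`H₃(ℤ)` the integer Heisenberg group), realized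
set-theoretically as `ℤ⁴` with multiplication
`(k₁,k₂,k₃,k₄)(l₁,l₂,l₃,l₄) = (k₁+l₁, k₂+l₂+k₄l₃, k₃+l₃, k₄+l₄)`. -/
@[ext] structure Gam : Type where
  k1 : ℤ
  k2 : ℤ
  k3 : ℤ
  k4 : ℤ

namespace Gam

instance : Mul Gam :=
  ⟨fun x y => ⟨x.k1 + y.k1, x.k2 + y.k2 + x.k4 * y.k3, x.k3 + y.k3, x.k4 + y.k4⟩⟩

instance : One Gam := ⟨⟨0, 0, 0, 0⟩⟩

instance : Inv Gam :=
  ⟨fun x => ⟨-x.k1, -x.k2 + x.k4 * x.k3, -x.k3, -x.k4⟩⟩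

@[simp] lemma mul_def (x y : Gam) :
    x * y = ⟨x.k1 + y.k1, x.k2 + y.k2 + x.k4 * y.k3, x.k3 + y.k3, x.k4 + y.k4⟩ := rfl

@[simp] lemma one_def : (1 : Gam) = ⟨0, 0, 0, 0⟩ := rfl

@[simp] lemma inv_def (x : Gam) :
    x⁻¹ = ⟨-x.k1, -x.k2 + x.k4 * x.k3, -x.k3, -x.k4⟩ := rfl

instance : Group Gam :=
  Group.ofLeftAxioms
    (fun a b c => by ext <;> simp <;> ring)
    (fun a => by ext <;> simp)
    (fun a => by ext <;> simp <;> ring)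

end Gam

/-- The twisted center `Z(G,σ)`: all central elements `g` such that `σ(g,h) = σ(h,g)`
for every `h ∈ G`. -/
def twistedCenter {G : Type*} [Group G] (σ : G → G → Circle) : Set G :=
  {g | g ∈ Subgroup.center G ∧ ∀ h, σ g h = σ h g}

/-- The 2-cocycle `σ_{α,β}` on `Γ` given by
`σ_{α,β}(k,l) = exp(2πi(−αβk₁l₃ + β³k₄l₂ + β³k₄²l₃/2))`. -/
noncomputable def sigmaGam (α β : ℝ) (x y : Gam) : Circle :=
  Circle.exp (2 * Real.pi *
    (-(α * β) * (x.k1 : ℝ) * (y.k3 : ℝ) + β ^ 3 * (x.k4 : ℝ) * (y.k2 : ℝ) +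
      β ^ 3 * (x.k4 : ℝ) ^ 2 * (y.k3 : ℝ) / 2))

/-!
For central `g = (k₁, k₂, 0, 0)` the condition `σ(g,h) = σ(h,g)` reads
`h₃ k₁ [αβ] + h₄ k₂ [β³] = 0` in `ℝ/ℤ`. As `h₃` and `h₄` are arbitrary integers, it holds for all
`h` exactly when the orders of `[αβ]` and `[β³]` in `ℝ/ℤ` (`0` for infinite order) divide `k₁` and
`k₂`. Here `[αβ]` has order `a`, and `[β³]` has infinite order.
-/

lemma Gam.mem_center_iff {g : Gam} : g ∈ Subgroup.center Gam ↔ g.k3 = 0 ∧ g.k4 = 0 := by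
  rw [Subgroup.mem_center_iff]
  constructor
  · intro hg
    have h_k3 := congrArg Gam.k2 (hg ⟨0, 0, 0, 1⟩)
    have h_k4 := congrArg Gam.k2 (hg ⟨0, 0, 1, 0⟩)
    simp only [Gam.mul_def] at h_k3 h_k4
    constructor <;> linarith
  · rintro ⟨h_k3, h_k4⟩ h
    ext <;> simp [h_k3, h_k4, add_comm]

lemma forall_zsmul_add_zsmul_eq_zero_iff {A : Type*} [AddGroup A] {x y : A} :
    (∀ m n : ℤ, m • x + n • y = 0) ↔ x = 0 ∧ y = 0 := by
  constructor
  · intro h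
    exact ⟨by simpa using h 1 0, by simpa using h 0 1⟩
  · rintro ⟨rfl, rfl⟩
    simp

lemma circleExp_two_pi_mul_eq_iff {x y : ℝ} :
    Circle.exp (2 * Real.pi * x) = Circle.exp (2 * Real.pi * y) ↔
      (x : UnitAddCircle) = (y : UnitAddCircle) := by
  simpa only [AddCircle.toCircle_apply_mk, div_one] using
    (AddCircle.injective_toCircle (T := 1) one_ne_zero).eq_iff (a := x) (b := y)

lemma addOrderOf_coe_unitAddCircle_eq_zero_iff {x : ℝ} :
    addOrderOf (x : UnitAddCircle) = 0 ↔ Irrational x := by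
  rw [addOrderOf_eq_zero_iff, AddCircle.not_isOfFinAddOrder_iff_forall_rat_ne_div, div_one]
  simp [Irrational]

lemma zsmul_coe_unitAddCircle_eq_zero_iff {n : ℤ} {x : ℝ} :
    n • (x : UnitAddCircle) = 0 ↔ ∃ m : ℤ, (n : ℝ) * x = m := by
  rw [← AddCircle.coe_zsmul, AddCircle.coe_eq_zero_iff]
  simp [eq_comm]

lemma addOrderOf_eq_of_forall_pos_le {A : Type*} [AddGroup A] {x : A} {a : ℤ} (ha : 0 < a)
    (hax : a • x = 0) (hmin : ∀ b : ℤ, 0 < b → b • x = 0 → a ≤ b) :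
    (addOrderOf x : ℤ) = a := by
  have h_dvd : (addOrderOf x : ℤ) ∣ a := addOrderOf_dvd_iff_zsmul_eq_zero.mpr hax
  have h_pos : 0 < (addOrderOf x : ℤ) := by
    have h_ne := ne_zero_of_dvd_ne_zero ha.ne' h_dvd
    omega
  exact (Int.le_of_dvd ha h_dvd).antisymm
    (hmin _ h_pos (addOrderOf_dvd_iff_zsmul_eq_zero.mp dvd_rfl))

lemma addOrderOf_coe_unitAddCircle_eq_of_forall_pos_le {x : ℝ} {a : ℤ} (ha : 0 < a)
    (hax : ∃ m : ℤ, (a : ℝ) * x = m)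
    (hmin : ∀ b : ℤ, 0 < b → (∃ m : ℤ, (b : ℝ) * x = m) → a ≤ b) :
    (addOrderOf (x : UnitAddCircle) : ℤ) = a := by
  simp only [← zsmul_coe_unitAddCircle_eq_zero_iff] at hax hmin
  exact addOrderOf_eq_of_forall_pos_le ha hax hmin

lemma sigmaGam_comm_iff (α β : ℝ) {g : Gam} (hg : g ∈ Subgroup.center Gam) (h : Gam) :
    sigmaGam α β g h = sigmaGam α β h g ↔
      h.k3 • g.k1 • ((α * β : ℝ) : UnitAddCircle) +
        h.k4 • g.k2 • ((β ^ 3 : ℝ) : UnitAddCircle) = 0 := by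
  obtain ⟨h_k3, h_k4⟩ := Gam.mem_center_iff.mp hg
  rw [sigmaGam, sigmaGam, circleExp_two_pi_mul_eq_iff, eq_comm, ← sub_eq_zero]
  simp only [← AddCircle.coe_zsmul, ← AddCircle.coe_sub, ← AddCircle.coe_add, zsmul_eq_mul,
    h_k3, h_k4, Int.cast_zero]
  ring_nf

lemma forall_sigmaGam_comm_iff (α β : ℝ) {g : Gam} (hg : g ∈ Subgroup.center Gam) :
    (∀ h, sigmaGam α β g h = sigmaGam α β h g) ↔
      g.k1 • ((α * β : ℝ) : UnitAddCircle) = 0 ∧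
        g.k2 • ((β ^ 3 : ℝ) : UnitAddCircle) = 0 := by
  simp only [sigmaGam_comm_iff α β hg, ← forall_zsmul_add_zsmul_eq_zero_iff]
  exact ⟨fun hcomm m n => hcomm ⟨0, 0, m, n⟩, fun hzero h => hzero h.k3 h.k4⟩

theorem twistedCenter_Gam_rational_general (α β : ℝ) :
    twistedCenter (sigmaGam α β) =
      {g : Gam | (addOrderOf ((α * β : ℝ) : UnitAddCircle) : ℤ) ∣ g.k1 ∧
        (addOrderOf ((β ^ 3 : ℝ) : UnitAddCircle) : ℤ) ∣ g.k2 ∧ g.k3 = 0 ∧ g.k4 = 0} := by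
  ext g
  calc g ∈ twistedCenter (sigmaGam α β)
    _ ↔ g ∈ Subgroup.center Gam ∧ g.k1 • ((α * β : ℝ) : UnitAddCircle) = 0 ∧
          g.k2 • ((β ^ 3 : ℝ) : UnitAddCircle) = 0 :=
        and_congr_right (forall_sigmaGam_comm_iff α β)
    _ ↔ _ := by
        rw [Gam.mem_center_iff, ← addOrderOf_dvd_iff_zsmul_eq_zero,
          ← addOrderOf_dvd_iff_zsmul_eq_zero, and_comm, and_assoc]
        rfl

/-- Suppose `α, β > 0`, `β³` is irrational, `αβ` is rational, and `a`
is the minimal positive integer with `aαβ ∈ ℤ`.  Then the twisted center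
`Z(Γ, σ_{α,β})` is exactly the subgroup `aℤ × {0} × {0} × {0}`. -/
theorem twistedCenter_Gam_rational (α β : ℝ) (hα : 0 < α) (hβ : 0 < β)
    (hβ3 : Irrational (β ^ 3)) (a : ℤ) (ha : 0 < a)
    (haZ : ∃ m : ℤ, (a : ℝ) * (α * β) = (m : ℝ))
    (hmin : ∀ b : ℤ, 0 < b → (∃ m : ℤ, (b : ℝ) * (α * β) = (m : ℝ)) → a ≤ b) :
    twistedCenter (sigmaGam α β) =
      {g : Gam | a ∣ g.k1 ∧ g.k2 = 0 ∧ g.k3 = 0 ∧ g.k4 = 0} := by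
  simp [twistedCenter_Gam_rational_general, addOrderOf_coe_unitAddCircle_eq_zero_iff.mpr hβ3,
    addOrderOf_coe_unitAddCircle_eq_of_forall_pos_le ha haZ hmin]
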